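/- Let D be a strongly connected digraph of order n ≥ 3. If D has at least n − 1 vertices of degree at least n, then D is Hamiltonian or contains a directed cycle of length n − 1. -/

import Mathlib

/-!
Basic definitions for finite digraphs (no loops, no multiple arcs), where the arc
relation is `A : V → V → Prop`.  Paths and cycles are given as lists of (distinct)
vertices.
-/

variable {V : Type*}

/-- A (directed) path, given by the list of its vertices. -/
def IsPathOn (A : V → V → Prop) (l : List V) : Prop :=
  l ≠ [] ∧ l.Nodup ∧ l.Chain' A

/-- A (directed) cycle, given by the list of its vertices; its length (number of
arcs) equals the length of the list. -/
def IsCycleOn (A : V → V → Prop) (l : List V) : Prop :=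
  2 ≤ l.length ∧ l.Nodup ∧ l.Chain' A ∧
    ∀ a ∈ l.getLast?, ∀ b ∈ l.head?, A a b

/-- A directed path from `a` to `b`. -/
def IsPathFromTo (A : V → V → Prop) (l : List V) (a b : V) : Prop :=
  IsPathOn A l ∧ l.head? = some a ∧ l.getLast? = some b

/-- Out-degree `d⁺(x)`. -/
noncomputable def outDeg (A : V → V → Prop) (x : V) : ℕ := {y | A x y}.ncard

/-- In-degree `d⁻(x)`. -/
noncomputable def inDeg (A : V → V → Prop) (x : V) : ℕ := {y | A y x}.ncard

/-- Degree `d(x) = d⁺(x) + d⁻(x)`. -/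
noncomputable def deg (A : V → V → Prop) (x : V) : ℕ := outDeg A x + inDeg A x

/-- Out-degree into a set, `d⁺(x, S)`. -/
noncomputable def outDegOn (A : V → V → Prop) (x : V) (S : Set V) : ℕ :=
  {y ∈ S | A x y}.ncard

/-- In-degree from a set, `d⁻(x, S)`. -/
noncomputable def inDegOn (A : V → V → Prop) (x : V) (S : Set V) : ℕ :=
  {y ∈ S | A y x}.ncard

/-- Degree with respect to a set, `d(x, S) = d⁺(x, S) + d⁻(x, S)`. -/
noncomputable def degOn (A : V → V → Prop) (x : V) (S : Set V) : ℕ :=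
  outDegOn A x S + inDegOn A x S

/-- Two distinct vertices are adjacent if there is an arc between them in some
direction. -/
def DAdj (A : V → V → Prop) (x y : V) : Prop := A x y ∨ A y x

/-- `D` is `S`-strongly connected: between any two distinct vertices of `S` there
are directed paths in both directions. -/
def SetStronglyConnected (A : V → V → Prop) (S : Set V) : Prop :=
  ∀ x ∈ S, ∀ y ∈ S, x ≠ y → ∃ l, IsPathFromTo A l x y

/-- Strong connectivity. -/
def StronglyConnected (A : V → V → Prop) : Prop :=
  ∀ x y : V, x ≠ y → ∃ l, IsPathFromTo A l x y

/-- 2-strong connectivity: at least 3 vertices, and deleting any vertex leaves a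
strongly connected digraph. -/
def TwoStronglyConnected [Fintype V] (A : V → V → Prop) : Prop :=
  3 ≤ Fintype.card V ∧
    ∀ w x y : V, x ≠ w → y ≠ w → x ≠ y → ∃ l, IsPathFromTo A l x y ∧ w ∉ l

/-- Condition `A₀` for a set `Y` of vertices. -/
def CondA0 [Fintype V] (A : V → V → Prop) (Y : Set V) : Prop :=
  ∀ x ∈ Y, ∀ y ∈ Y, ∀ z ∈ Y,
    x ≠ y → x ≠ z → y ≠ z → ¬ DAdj A x y →
      (¬ A x z →
        deg A x + deg A y + outDeg A x + inDeg A z ≥ 3 * Fintype.card V - 2) ∧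
      (¬ A z x →
        deg A x + deg A y + inDeg A x + outDeg A z ≥ 3 * Fintype.card V - 2)

/-- A `C`-bypass: a path of length at least two whose end-vertices lie on the
cycle `c` and whose internal vertices avoid `c`. -/
def IsBypass (A : V → V → Prop) (c p : List V) : Prop :=
  IsPathOn A p ∧ 3 ≤ p.length ∧
    (∀ a ∈ p.head?, a ∈ c) ∧ (∀ b ∈ p.getLast?, b ∈ c) ∧
    ∀ v ∈ p.tail.dropLast, v ∉ c

/-- The vertex `y` can be inserted into the path `p`. -/
def CanInsert (A : V → V → Prop) (p : List V) (y : V) : Prop :=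
  ∃ i, ∃ h : i + 1 < p.length, A (p[i]'(Nat.lt_of_succ_lt h)) y ∧ A y (p[i+1]'h)

/-- A `(C, x)`-path: a path from a vertex `u` of the cycle `c` to `x`, meeting `c`
only in `u`. -/
def IsCtoXPath (A : V → V → Prop) (c l : List V) (u x : V) : Prop :=
  IsPathFromTo A l u x ∧ u ∈ c ∧ ∀ v ∈ l, v ∈ c → v = u

/-- An `(x, C)`-path: a path from `x` to a vertex `v` of the cycle `c`, meeting `c`
only in `v`. -/
def IsXtoCPath (A : V → V → Prop) (c l : List V) (x v : V) : Prop :=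
  IsPathFromTo A l x v ∧ v ∈ c ∧ ∀ w ∈ l, w ∈ c → w = v

/-- The number of arcs between `x` and `u`, both directions counted. -/
noncomputable def arcCount (r : V → V → Prop) (x u : V) : ℕ :=
  open Classical in (if r x u then 1 else 0) + (if r u x then 1 else 0)

/-- A closed chain of distinct vertices; single vertices with a loop are allowed. -/
def IsClosedChain (r : V → V → Prop) (l : List V) : Prop :=
  l.Nodup ∧ (l ++ l).IsChain r

lemma arcCount_le_two (r : V → V → Prop) (x u : V) : arcCount r x u ≤ 2 := by
  unfold arcCount; split_ifs <;> omega

lemma arcCount_le_one {r : V → V → Prop} {x u : V} (h : ¬ (r x u ∧ r u x)) :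
    arcCount r x u ≤ 1 := by
  unfold arcCount; split_ifs <;> first | omega | tauto

lemma arcCount_add_le_two {r : V → V → Prop} {x y w : V} (h : ¬ (r x w ∧ r w y))
    (h' : ¬ (r y w ∧ r w x)) : arcCount r x w + arcCount r y w ≤ 2 := by
  unfold arcCount; split_ifs <;> first | omega | tauto

lemma IsClosedChain.rotate {r : V → V → Prop} {l₁ l₂ : List V}
    (h : IsClosedChain r (l₁ ++ l₂)) : IsClosedChain r (l₂ ++ l₁) := by
  refine ⟨List.nodup_append_comm.1 h.1, ?_⟩
  have h2 := h.2
  rcases l₁ with _ | ⟨a, l₁⟩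
  · simpa using h2
  rcases l₂ with _ | ⟨b, l₂⟩
  · simpa using h2
  simp only [List.isChain_append, List.head?_append, List.getLast?_append] at h2 ⊢
  simp only [List.head?_cons, List.getLast?_cons, Option.some_or] at h2 ⊢
  tauto

lemma sum_arcCount_le_of_not_insertable {r : V → V → Prop} {v h : V} {t : List V}
    (hc : (h :: t).IsChain (fun u w => ¬ (r u v ∧ r v w))) :
    ((h :: t).map (arcCount r v)).sum ≤
      (h :: t).length + (open Classical in if r v h then 1 else 0) := by
  classical
  induction t generalizing h with
  | nil => simp [arcCount]; split_ifs <;> omega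
  | cons h' t ih =>
    rw [List.isChain_cons_cons] at hc
    have := ih hc.2
    have h1 := hc.1
    rw [List.map_cons, List.sum_cons, List.length_cons]
    have h2 : arcCount r v h + (if r v h' then 1 else 0) ≤ 1 + (if r v h then 1 else 0) := by
      unfold arcCount
      by_cases a : r h v <;> by_cases b : r v h' <;> simp_all
    omega

lemma sum_arcCount_le_length_add_one {r : V → V → Prop} {v : V} {l : List V}
    (hc : l.IsChain (fun u w => ¬ (r u v ∧ r v w))) :
    (l.map (arcCount r v)).sum ≤ l.length + 1 := by
  rcases l with _ | ⟨h, t⟩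
  · simp
  · refine (sum_arcCount_le_of_not_insertable hc).trans ?_
    split_ifs <;> omega

lemma isChain_insert {r : V → V → Prop} {l₁ l₂ : List V} {u w v : V}
    (h : (l₁ ++ u :: w :: l₂).IsChain r) (huv : r u v) (hvw : r v w) :
    (l₁ ++ u :: v :: w :: l₂).IsChain r := by
  simp only [List.isChain_append_cons_cons, List.isChain_cons_cons] at h ⊢
  tauto

/-- Among the paths with the end-vertices of `L` obtained by enlarging `L` with vertices of `g`,
there is one into which no further vertex of `g` can be inserted. -/
lemma exists_saturated_path {r : V → V → Prop} {g L : List V} (hL : L.IsChain r)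
    (hnd : (g ++ L).Nodup) :
    ∃ P : List V, P.Nodup ∧ P ⊆ g ++ L ∧ L ⊆ P ∧ P.IsChain r ∧ P.head? = L.head? ∧
      P.getLast? = L.getLast? ∧
      ∀ c ∈ g, c ∉ P → P.IsChain (fun u w => ¬ (r u c ∧ r c w)) := by
  classical
  let p : ℕ → Prop := fun m => ∃ P : List V, P.length = m ∧ P.Nodup ∧ P ⊆ g ++ L ∧ L ⊆ P ∧
    P.IsChain r ∧ P.head? = L.head? ∧ P.getLast? = L.getLast?
  have hb : ∀ m, p m → m ≤ (g ++ L).length := by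
    rintro m ⟨P, rfl, hP, hs, -⟩
    exact (hP.subperm hs).length_le
  have h0 : p L.length :=
    ⟨L, rfl, hnd.of_append_right, List.subset_append_right _ _, List.Subset.refl _, hL, rfl, rfl⟩
  obtain ⟨P, hlen, h1, h2, h3, h4, h5, h6⟩ := Nat.findGreatest_spec (hb _ h0) h0
  refine ⟨P, h1, h2, h3, h4, h5, h6, fun c hcg hcP => ?_⟩
  rw [List.isChain_iff_forall_rel_of_append_cons_cons]
  rintro u w l₁ l₂ rfl ⟨huc, hcw⟩
  have hp : p (l₁ ++ u :: c :: w :: l₂).length := by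
    refine ⟨_, rfl, ?_, ?_, ?_, isChain_insert h4 huc hcw, ?_, ?_⟩
    · have : (l₁ ++ u :: c :: w :: l₂).Perm (c :: (l₁ ++ u :: w :: l₂)) := by
        have := List.perm_middle (a := c) (l₁ := l₁ ++ [u]) (l₂ := w :: l₂)
        simpa using this
      rw [this.nodup_iff, List.nodup_cons]
      exact ⟨hcP, h1⟩
    · intro x hx
      by_cases hxc : x = c
      · subst hxc; exact List.mem_append_left _ hcg
      · apply h2; simp at hx ⊢; tauto
    · intro x hx
      have := h3 hx
      simp at this ⊢; tauto
    · rw [← h5]; cases l₁ <;> simp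
    · rw [← h6]; simp [List.getLast?_append, List.getLast?_cons_cons]
  have := Nat.le_findGreatest (hb _ hp) hp
  rw [← hlen] at this
  simp at this

lemma IsClosedChain.enter_later {r : V → V → Prop} {g₁ g₂ L Q : List V} {c : V}
    (hcyc : IsClosedChain r (g₁ ++ c :: g₂ ++ L)) (hL : L ≠ [])
    (h1 : (L ++ Q).IsChain r) (h2 : (Q ++ [c]).IsChain r) :
    (c :: g₂ ++ L ++ Q).IsChain r ∧ (Q ++ (c :: g₂ ++ L)).IsChain r := by
  have h3 := hcyc.2
  simp only [List.isChain_append, List.append_assoc] at h1 h2 h3 ⊢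
  obtain ⟨l, a, rfl⟩ := List.exists_cons_of_ne_nil hL
  simp_all

lemma IsClosedChain.leave_later {r : V → V → Prop} {g₁ g₂ L Q : List V} {c : V}
    (hcyc : IsClosedChain r (g₁ ++ c :: g₂ ++ L)) (hL : L ≠ [])
    (h1 : ([c] ++ Q).IsChain r) (h2 : (Q ++ L).IsChain r) :
    (L ++ (g₁ ++ [c]) ++ Q).IsChain r ∧ (Q ++ (L ++ (g₁ ++ [c]))).IsChain r := by
  have h3 := hcyc.2
  simp only [List.isChain_append, List.append_assoc] at h1 h2 h3 ⊢
  obtain ⟨l, a, rfl⟩ := List.exists_cons_of_ne_nil hL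
  rcases g₁ with _ | ⟨b, g₁⟩ <;> simp_all

lemma arcCount_bypass_bounds [DecidableEq V] {r : V → V → Prop} {S : Set V} {M : Finset V}
    {L Q : List V} {v c : V}
    (hexit : ∀ Q' : List V, Q'.Nodup → (∀ x ∈ Q', x ∉ S) → (∃ w ∈ Q', w ∈ M) →
      (L ++ Q').IsChain r → (Q' ++ [c]).IsChain r → False)
    (henter : ∀ Q' : List V, Q'.Nodup → (∀ x ∈ Q', x ∉ S) → (∃ w ∈ Q', w ∈ M) →
      ([c] ++ Q').IsChain r → (Q' ++ L).IsChain r → False)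
    (hnd : Q.Nodup) (hQS : ∀ x ∈ Q, x ∉ S) (hvQ : v ∈ Q) (hvM : v ∈ M)
    (h1 : (L ++ Q).IsChain r) (h2 : (Q ++ L).IsChain r) :
    arcCount r v c = 0 ∧ ∀ w ∉ S, arcCount r v w + arcCount r c w ≤
      2 + (if w ∈ M then 0 else 1) := by
  have ha : ∀ Q₁ w Q₂, Q = Q₁ ++ w :: Q₂ → (∃ x ∈ Q₁ ++ [w], x ∈ M) → ¬ r w c := by
    rintro Q₁ w Q₂ rfl hM hwc
    refine hexit (Q₁ ++ [w]) ?_ ?_ hM ?_ ?_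
    · exact hnd.sublist (by simp)
    · intro x hx; apply hQS; simp at hx ⊢; tauto
    · exact h1.prefix ⟨Q₂, by simp⟩
    · have : (Q₁ ++ [w]).IsChain r := h1.infix ⟨L, Q₂, by simp⟩
      exact this.append (by simp) (by simpa using hwc)
  have hb : ∀ Q₁ w Q₂, Q = Q₁ ++ w :: Q₂ → (∃ x ∈ w :: Q₂, x ∈ M) → ¬ r c w := by
    rintro Q₁ w Q₂ rfl hM hcw
    refine henter (w :: Q₂) ?_ ?_ hM ?_ ?_
    · exact hnd.sublist (by simp)
    · intro x hx; apply hQS; simp at hx ⊢; tauto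
    · have : (w :: Q₂).IsChain r := h1.suffix ⟨L ++ Q₁, by simp⟩
      simpa using ⟨hcw, this⟩
    · exact h2.suffix ⟨Q₁, by simp⟩
  obtain ⟨Q₁, Q₂, hQ⟩ := List.append_of_mem hvQ
  have hvc := ha _ _ _ hQ ⟨v, by simp, hvM⟩
  have hcv := hb _ _ _ hQ ⟨v, by simp, hvM⟩
  refine ⟨by simp [arcCount, hvc, hcv], fun w hw => ?_⟩
  by_cases hwQ : w ∈ Q
  · obtain ⟨P₁, P₂, hP⟩ := List.append_of_mem hwQ
    have hor : v ∈ P₁ ++ [w] ∨ v ∈ w :: P₂ := by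
      rw [hP] at hvQ; simp at hvQ ⊢; tauto
    have hvw := arcCount_le_two r v w
    by_cases hwM : w ∈ M
    · have := ha _ _ _ hP ⟨w, by simp, hwM⟩
      have := hb _ _ _ hP ⟨w, by simp, hwM⟩
      have : arcCount r c w = 0 := by simp [arcCount, *]
      omega
    · have : arcCount r c w ≤ 1 := by
        rcases hor with h | h
        · have := ha _ _ _ hP ⟨v, h, hvM⟩
          exact arcCount_le_one (by tauto)
        · have := hb _ _ _ hP ⟨v, h, hvM⟩
          exact arcCount_le_one (by tauto)
      simp only [hwM]; simp; omega
  · subst hQ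
    have hout : ¬ (r v w ∧ r w c) := by
      rintro ⟨hvw, hwc⟩
      refine hexit (Q₁ ++ [v] ++ [w]) ?_ ?_ ⟨v, by simp, hvM⟩ ?_ ?_
      · refine List.Nodup.append (hnd.sublist (by simp)) (by simp) ?_
        simp at hwQ ⊢; tauto
      · intro x hx
        by_cases hxw : x = w
        · exact hxw ▸ hw
        · apply hQS; simp at hx ⊢; tauto
      · have : (L ++ (Q₁ ++ [v])).IsChain r := h1.prefix ⟨Q₂, by simp⟩
        rw [← List.append_assoc]
        exact this.append (by simp) (by simpa using hvw)
      · have : (Q₁ ++ [v]).IsChain r := h1.infix ⟨L, Q₂, by simp⟩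
        rw [List.append_assoc]
        exact this.append (by simpa using hwc) (by simpa using hvw)
    have hin : ¬ (r c w ∧ r w v) := by
      rintro ⟨hcw, hwv⟩
      refine henter (w :: v :: Q₂) ?_ ?_ ⟨v, by simp, hvM⟩ ?_ ?_
      · rw [List.nodup_cons]
        exact ⟨by simp at hwQ ⊢; tauto, hnd.sublist (by simp)⟩
      · intro x hx
        by_cases hxw : x = w
        · exact hxw ▸ hw
        · apply hQS; simp at hx ⊢; tauto
      · have : (v :: Q₂).IsChain r := h1.suffix ⟨L ++ Q₁, by simp⟩
        simpa using ⟨hcw, hwv, this⟩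
      · have : (v :: Q₂ ++ L).IsChain r := h2.suffix ⟨Q₁, by simp⟩
        simpa using ⟨hwv, this⟩
    exact (arcCount_add_le_two hout hin).trans (Nat.le_add_right _ _)

lemma sum_arcCount_toFinset [DecidableEq V] {r : V → V → Prop} {l : List V} (hl : l.Nodup)
    (x : V) : ∑ u ∈ l.toFinset, arcCount r x u = (l.map (arcCount r x)).sum :=
  List.sum_toFinset _ hl

/-- A closed chain carrying the largest possible number of vertices of `M` has no bypass through
another vertex of `M`. -/
lemma no_bypass_of_max [Fintype V] [DecidableEq V] {r : V → V → Prop} {M : Finset V} {k : ℕ}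
    (hM : ∀ x ∉ M, ∀ y ∉ M, x = y)
    (hdeg : ∀ v ∈ M, Fintype.card V + 2 ≤ ∑ u, arcCount r v u)
    (hmax : ∀ l, IsClosedChain r l → l.countP (· ∈ M) ≤ k) :
    ∀ (m : ℕ) (g L Q : List V), g.length = m → IsClosedChain r (g ++ L) →
      (g ++ L).countP (· ∈ M) = k → L ≠ [] → Q.Nodup → (∀ x ∈ Q, x ∉ g ++ L) →
      (∃ v ∈ Q, v ∈ M) → (L ++ Q).IsChain r → (Q ++ L).IsChain r → False := by
  intro m
  induction m using Nat.strong_induction_on with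
  | _ m ih =>
  rintro g L Q rfl hcyc hk hL hQ hQS ⟨v, hvQ, hvM⟩ h1 h2
  have hvS := hQS v hvQ
  have hexit : ∀ c ∈ g, ∀ Q' : List V, Q'.Nodup → (∀ x ∈ Q', x ∉ {x | x ∈ g ++ L}) →
      (∃ w ∈ Q', w ∈ M) → (L ++ Q').IsChain r → (Q' ++ [c]).IsChain r → False := by
    intro c hc Q' hnd hd hM' hc1 hc2
    obtain ⟨g₁, g₂, rfl⟩ := List.append_of_mem hc
    obtain ⟨h3, h4⟩ := hcyc.enter_later hL hc1 hc2
    exact ih _ (by simp) g₁ (c :: g₂ ++ L) Q' rfl (by simpa using hcyc)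
      (by simpa using hk) (by simp) hnd (by simpa using hd) hM' h3 h4
  have henter : ∀ c ∈ g, ∀ Q' : List V, Q'.Nodup → (∀ x ∈ Q', x ∉ {x | x ∈ g ++ L}) →
      (∃ w ∈ Q', w ∈ M) → ([c] ++ Q').IsChain r → (Q' ++ L).IsChain r → False := by
    intro c hc Q' hnd hd hM' hc1 hc2
    obtain ⟨g₁, g₂, rfl⟩ := List.append_of_mem hc
    obtain ⟨h3, h4⟩ := hcyc.leave_later hL hc1 hc2
    have hrot : IsClosedChain r (g₂ ++ (L ++ (g₁ ++ [c]))) := by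
      have : IsClosedChain r ((g₁ ++ [c]) ++ (g₂ ++ L)) := by simpa using hcyc
      simpa using this.rotate
    refine ih _ (by simp; omega) g₂ (L ++ (g₁ ++ [c])) Q' rfl hrot
      ?_ (by simp) hnd ?_ hM' h3 h4
    · rw [← hk]; simp only [List.countP_append, List.countP_cons, List.countP_nil]; omega
    · intro x hx; have := hd x hx; simp at this ⊢; tauto
  obtain ⟨P, hPnd, hPS, hLP, hPc, hPh, hPl, hPsat⟩ :=
    exists_saturated_path (r := r) (g := g) (L := L) (h1.prefix ⟨Q, rfl⟩) hcyc.1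
  have hQne : Q ≠ [] := List.ne_nil_of_mem hvQ
  obtain ⟨c, hcg, hcM, hcP⟩ : ∃ c ∈ g, c ∈ M ∧ c ∉ P := by
    by_contra! hcon
    have hPQ : IsClosedChain r (P ++ Q) := by
      refine ⟨List.Nodup.append hPnd hQ fun x hx hx' => hQS x hx' (hPS hx), ?_⟩
      obtain ⟨q, Q', rfl⟩ := List.exists_cons_of_ne_nil hQne
      obtain ⟨a, L', rfl⟩ := List.exists_cons_of_ne_nil hL
      simp only [List.isChain_append, List.head?_append, List.getLast?_append] at h1 h2 ⊢
      rw [hPh, hPl]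
      simp at h1 h2 ⊢
      tauto
    have hle := hmax _ hPQ
    have hQ1 : 1 ≤ Q.countP (· ∈ M) := List.countP_pos_iff.2 ⟨v, hvQ, by simpa using hvM⟩
    have hP1 : (g ++ L).countP (· ∈ M) ≤ P.countP (· ∈ M) := by
      rw [List.countP_eq_length_filter, List.countP_eq_length_filter]
      refine ((hcyc.1.filter _).subperm fun x hx => ?_).length_le
      simp only [List.mem_filter, List.mem_append, decide_eq_true_eq] at hx ⊢
      exact ⟨hx.1.elim (fun h => hcon x h hx.2) (fun h => hLP h), hx.2⟩
    rw [List.countP_append] at hle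
    omega
  have hvL : L.IsChain (fun u w => ¬ (r u v ∧ r v w)) := by
    rw [List.isChain_iff_forall_rel_of_append_cons_cons]
    rintro u w l₁ l₂ rfl ⟨huv, hvw⟩
    have hp : (g ++ (l₁ ++ u :: v :: w :: l₂)).Perm (v :: (g ++ (l₁ ++ u :: w :: l₂))) := by
      simpa using List.perm_middle (a := v) (l₁ := g ++ l₁ ++ [u]) (l₂ := w :: l₂)
    have hins : IsClosedChain r (g ++ (l₁ ++ u :: v :: w :: l₂)) := by
      refine ⟨?_, ?_⟩
      · rw [hp.nodup_iff, List.nodup_cons]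
        exact ⟨hvS, hcyc.1⟩
      · have h3 := hcyc.2
        have h4 := isChain_insert (l₁ := g ++ l₁) (v := v) (by simpa using h3) huv hvw
        have h5 := isChain_insert (l₁ := g ++ l₁ ++ u :: v :: w :: l₂ ++ g ++ l₁) (l₂ := l₂)
          (by simpa using h4) huv hvw
        simpa using h5
    have := hmax _ hins
    rw [hp.countP_eq, List.countP_cons, hk] at this
    simp [hvM] at this
  have hbounds := fun c hc => arcCount_bypass_bounds (hexit c hc) (henter c hc) hQ hQS hvQ hvM h1 h2
  have hdv := hdeg v hvM
  have hdc := hdeg c hcM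
  set S := (g ++ L).toFinset with hS
  have hcardS : S.card = g.length + L.length := by
    rw [hS, List.toFinset_card_of_nodup hcyc.1, List.length_append]
  have hSc : S.card + Sᶜ.card = Fintype.card V := Finset.card_add_card_compl S
  have hR : ∑ w ∈ Sᶜ, (arcCount r v w + arcCount r c w) ≤ 2 * Sᶜ.card + 1 := by
    calc ∑ w ∈ Sᶜ, (arcCount r v w + arcCount r c w)
        ≤ ∑ w ∈ Sᶜ, (2 + if w ∈ M then 0 else 1) := by
          refine Finset.sum_le_sum fun w hw => ?_
          exact (hbounds c hcg).2 w (by simpa [hS] using hw)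
      _ = 2 * Sᶜ.card + (Sᶜ.filter (· ∉ M)).card := by
          rw [Finset.sum_add_distrib, Finset.card_filter]
          simp [mul_comm, ite_not]
      _ ≤ 2 * Sᶜ.card + 1 := by
          gcongr
          refine Finset.card_le_one.2 fun a ha b hb => ?_
          exact hM a (Finset.mem_filter.1 ha).2 b (Finset.mem_filter.1 hb).2
  have hvsum : ∑ w ∈ S, arcCount r v w ≤ L.length + 1 := by
    rw [hS, sum_arcCount_toFinset hcyc.1, List.map_append, List.sum_append]
    have h0 : (g.map (arcCount r v)).sum = 0 := by
      refine List.sum_eq_zero fun x hx => ?_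
      obtain ⟨y, hy, rfl⟩ := List.mem_map.1 hx
      exact (hbounds y hy).1
    have := sum_arcCount_le_length_add_one hvL
    omega
  have hPsub : P.toFinset ⊆ S := fun x hx => by
    simpa [hS] using hPS (by simpa using hx)
  have hPcard : P.toFinset.card = P.length := List.toFinset_card_of_nodup hPnd
  have hLP' : L.length ≤ P.length := ((hcyc.1.of_append_right).subperm hLP).length_le
  have hcsum : ∑ w ∈ S, arcCount r c w ≤ 2 * (S.card - P.length) + (P.length + 1) := by
    rw [← Finset.sum_sdiff hPsub]
    refine add_le_add ?_ ?_
    · rw [← hPcard, ← Finset.card_sdiff_of_subset hPsub, mul_comm]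
      exact Finset.sum_le_card_nsmul _ _ _ fun x _ => arcCount_le_two r c x
    · rw [sum_arcCount_toFinset hPnd]
      exact sum_arcCount_le_length_add_one (hPsat c hcg hcP)
  have hPS' := Finset.card_le_card hPsub
  rw [← Finset.sum_add_sum_compl S] at hdv hdc
  rw [Finset.sum_add_distrib] at hR
  omega

lemma no_bypass_between [Fintype V] [DecidableEq V] {r : V → V → Prop} {M : Finset V} {k : ℕ}
    (hM : ∀ x ∉ M, ∀ y ∉ M, x = y)
    (hdeg : ∀ v ∈ M, Fintype.card V + 2 ≤ ∑ u, arcCount r v u)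
    (hmax : ∀ l, IsClosedChain r l → l.countP (· ∈ M) ≤ k)
    {l Q : List V} {x y : V} (hl : IsClosedChain r l) (hk : l.countP (· ∈ M) = k)
    (hx : x ∈ l) (hy : y ∈ l) (hQ : Q.Nodup) (hQl : ∀ z ∈ Q, z ∉ l) (hQM : ∃ v ∈ Q, v ∈ M)
    (h1 : (x :: Q).IsChain r) (h2 : (Q ++ [y]).IsChain r) : False := by
  obtain ⟨c₁, c₂, rfl⟩ := List.append_of_mem hy
  have hrot := hl.rotate
  have hx' : x ∈ y :: c₂ ++ c₁ := by simp at hx ⊢; tauto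
  obtain ⟨L, g, hLg⟩ := List.append_of_mem hx'
  rw [hLg] at hrot
  have hc : IsClosedChain r ((L ++ [x]) ++ g) := by simpa using hrot
  have hperm : (g ++ (L ++ [x])).Perm (c₁ ++ y :: c₂) := by
    refine List.perm_append_comm.trans ?_
    rw [List.append_assoc, List.singleton_append, ← hLg]
    exact List.perm_append_comm
  have hhead : (L ++ [x]).head? = some y := by
    have := congrArg List.head? hLg
    cases L <;> simp_all
  have hLc : (L ++ [x]).IsChain r := hc.2.prefix ⟨g ++ (L ++ [x] ++ g), by simp⟩
  refine no_bypass_of_max hM hdeg hmax _ g (L ++ [x]) Q rfl hc.rotate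
    (by rw [hperm.countP_eq, hk]) (by simp) hQ (fun z hz => ?_) hQM ?_ ?_
  · rw [hperm.mem_iff]; exact hQl z hz
  · refine hLc.append (h1.suffix ⟨[x], rfl⟩) ?_
    rw [List.isChain_cons] at h1
    simpa using h1.1
  · refine (h2.prefix ⟨[y], rfl⟩).append hLc ?_
    rw [List.isChain_append] at h2
    rw [hhead]
    simpa using h2.2.2

/-- A path meeting `S` has an initial segment ending at its first vertex in `S`. -/
lemma exists_initial_segment {r : V → V → Prop} {S : Set V} {l : List V} {v y : V}
    (hl : l.IsChain r) (hnd : l.Nodup) (hv : l.head? = some v) (hvS : v ∉ S)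
    (hy : y ∈ l) (hyS : y ∈ S) :
    ∃ Q, ∃ s ∈ S, Q.head? = some v ∧ Q.Nodup ∧ (∀ x ∈ Q, x ∉ S) ∧ (Q ++ [s]).IsChain r := by
  classical
  have hdrop : l.dropWhile (· ∉ S) ≠ [] := fun h => by
    simpa [hyS] using List.dropWhile_eq_nil_iff.1 h y hy
  obtain ⟨s, t, hst⟩ := List.exists_cons_of_ne_nil hdrop
  have hs : s ∈ S := by
    have := List.head_dropWhile_not (· ∉ S) hdrop
    simp only [hst, List.head_cons] at this
    simpa using this
  have hsplit : l.takeWhile (· ∉ S) ++ s :: t = l := by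
    rw [← hst]; exact List.takeWhile_append_dropWhile
  refine ⟨l.takeWhile (· ∉ S), s, hs, ?_, hnd.sublist (List.takeWhile_sublist _), ?_, ?_⟩
  · rcases l with _ | ⟨a, l⟩
    · simp at hv
    · obtain rfl : a = v := by simpa using hv
      simp [hvS]
  · intro x hx
    simpa using List.mem_takeWhile_imp hx
  · exact hl.prefix ⟨t, by simpa using hsplit⟩

lemma closed_chain_of_max_covers [Fintype V] [DecidableEq V] {r : V → V → Prop} {M : Finset V}
    {k : ℕ} (hM : ∀ x ∉ M, ∀ y ∉ M, x = y)
    (hdeg : ∀ v ∈ M, Fintype.card V + 2 ≤ ∑ u, arcCount r v u)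
    (hconn : ∀ x y : V, x ≠ y → ∃ l : List V, l.Nodup ∧ l.IsChain r ∧ l.head? = some x ∧
      l.getLast? = some y)
    (hmax : ∀ l, IsClosedChain r l → l.countP (· ∈ M) ≤ k) {l : List V}
    (hl : IsClosedChain r l) (hk : l.countP (· ∈ M) = k) (hpos : ∃ x ∈ l, x ∈ M) :
    ∀ v ∈ M, v ∈ l := by
  obtain ⟨c, hcl, hcM⟩ := hpos
  have hzero : ∀ v ∈ M, v ∉ l → ∀ s ∈ l, arcCount r v s = 0 := by
    intro v hvM hvl s hs
    have hvc : v ≠ c := by rintro rfl; exact hvl hcl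
    have hin : ¬ r s v := by
      intro hsv
      obtain ⟨p, hpn, hpc, hph, hpl⟩ := hconn v c hvc
      obtain ⟨Q, y, hy, hQv, hQn, hQS, hQc⟩ := exists_initial_segment (S := {x | x ∈ l})
        hpc hpn hph hvl (List.mem_of_getLast? hpl) hcl
      refine no_bypass_between hM hdeg hmax hl hk hs hy hQn hQS
        ⟨v, List.mem_of_head? hQv, hvM⟩ ?_ hQc
      exact List.IsChain.cons (hQc.prefix ⟨[y], rfl⟩) (by simpa [hQv] using hsv)
    have hout : ¬ r v s := by
      intro hvs
      obtain ⟨p, hpn, hpc, hph, hpl⟩ := hconn c v hvc.symm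
      obtain ⟨Q, y, hy, hQv, hQn, hQS, hQc⟩ := exists_initial_segment
        (r := fun a b => r b a) (S := {x | x ∈ l}) (l := p.reverse) (v := v) (y := c)
        (by simpa [List.isChain_reverse] using hpc) (by simpa using hpn) (by simpa using hpl) hvl
        (by simpa using List.mem_of_head? hph) hcl
      have hQc' : (y :: Q.reverse).IsChain r := by
        rw [← List.isChain_reverse] at hQc
        simpa using hQc
      refine no_bypass_between hM hdeg hmax hl hk hy hs (List.nodup_reverse.2 hQn)
        (by simpa using hQS) ⟨v, by simpa using List.mem_of_head? hQv, hvM⟩ hQc' ?_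
      exact List.IsChain.append (hQc'.suffix ⟨[y], rfl⟩) (by simp) (by simpa [hQv] using hvs)
    simp [arcCount, hin, hout]
  intro v hvM
  by_contra hvl
  have hdv := hdeg v hvM
  have hdc := hdeg c hcM
  set S := l.toFinset with hS
  have hSc : S.card + Sᶜ.card = Fintype.card V := Finset.card_add_card_compl S
  rw [← Finset.sum_add_sum_compl S] at hdv hdc
  have htwo : ∀ x (T : Finset V), ∑ w ∈ T, arcCount r x w ≤ T.card * 2 := fun x T =>
    Finset.sum_le_card_nsmul _ _ _ fun w _ => arcCount_le_two r x w
  have hvS : ∑ w ∈ S, arcCount r v w = 0 :=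
    Finset.sum_eq_zero fun w hw => hzero v hvM hvl w (by simpa [hS] using hw)
  have hcR : ∑ w ∈ Sᶜ, arcCount r c w ≤ 2 := by
    calc ∑ w ∈ Sᶜ, arcCount r c w = ∑ w ∈ Sᶜ with w ∉ M, arcCount r c w := by
          refine (Finset.sum_filter_of_ne (p := (· ∉ M)) fun w hw hne hwM => hne ?_).symm
          have := hzero w hwM (by simpa [hS] using hw) c hcl
          rw [← this]; exact Nat.add_comm _ _
      _ ≤ (Sᶜ.filter (· ∉ M)).card * 2 := htwo _ _
      _ ≤ 1 * 2 := by
          gcongr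
          refine Finset.card_le_one.2 fun a ha b hb => ?_
          exact hM a (Finset.mem_filter.1 ha).2 b (Finset.mem_filter.1 hb).2
  have := htwo v Sᶜ
  have := htwo c S
  omega

lemma sum_arcCount_reflexive_closure [Fintype V] [DecidableEq V] {A : V → V → Prop}
    (hloops : ∀ v, ¬ A v v) (v : V) :
    ∑ u, arcCount (fun x y => A x y ∨ x = y) v u = deg A v + 2 := by
  classical
  have h : ∀ u, arcCount (fun x y => A x y ∨ x = y) v u =
      ((if A v u then 1 else 0) + (if A u v then 1 else 0)) + (if u = v then 2 else 0) := by
    intro u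
    by_cases huv : u = v
    · subst huv; simp [arcCount, hloops]
    · simp [arcCount, huv, Ne.symm huv]
  simp_rw [h, Finset.sum_add_distrib]
  simp [deg, outDeg, inDeg, Set.ncard_eq_toFinset_card']

lemma IsClosedChain.isCycleOn {A : V → V → Prop} {l : List V}
    (h : IsClosedChain (fun x y => A x y ∨ x = y) l) (hlen : 2 ≤ l.length) : IsCycleOn A l := by
  obtain ⟨hnd, hc⟩ := h
  rw [List.isChain_append] at hc
  refine ⟨hlen, hnd, ?_, fun a ha b hb => ?_⟩
  · refine List.isChain_iff_forall_rel_of_append_cons_cons.2 ?_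
    rintro a b l₁ l₂ rfl
    refine (List.isChain_iff_forall_rel_of_append_cons_cons.1 hc.1 rfl).resolve_right ?_
    rintro rfl
    simp [List.nodup_append] at hnd
  · refine (hc.2.2 a ha b hb).resolve_right ?_
    rintro rfl
    rcases l with _ | ⟨x, _ | ⟨y, t⟩⟩
    · simp at hlen
    · simp at hlen
    · obtain rfl : x = a := by simpa using hb
      rw [List.getLast?_cons_cons] at ha
      exact (List.nodup_cons.1 hnd).1 (List.mem_of_getLast? ha)

/-- Corollary 1. -/
theorem hamiltonian_or_long_cycle_of_degrees [Fintype V] (A : V → V → Prop)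
    (hloops : ∀ v, ¬ A v v)
    (hn : 3 ≤ Fintype.card V) (hconn : StronglyConnected A)
    (hdeg : Fintype.card V - 1 ≤ {v : V | Fintype.card V ≤ deg A v}.ncard) :
    (∃ l : List V, IsCycleOn A l ∧ ∀ v : V, v ∈ l) ∨
      ∃ l : List V, IsCycleOn A l ∧ l.length = Fintype.card V - 1 := by
  classical
  let M : Finset V := {v | Fintype.card V ≤ deg A v}
  let r : V → V → Prop := fun x y => A x y ∨ x = y
  have hMcard : Fintype.card V - 1 ≤ M.card := by
    simpa [M, Set.ncard_eq_toFinset_card'] using hdeg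
  have hM : ∀ x ∉ M, ∀ y ∉ M, x = y := by
    intro x hx y hy
    have := Finset.card_add_card_compl M
    exact Finset.card_le_one.1 (show Mᶜ.card ≤ 1 by omega) x (by simpa using hx) y
      (by simpa using hy)
  have hdegM : ∀ v ∈ M, Fintype.card V + 2 ≤ ∑ u, arcCount r v u := by
    intro v hv
    rw [sum_arcCount_reflexive_closure hloops]
    have : Fintype.card V ≤ deg A v := by simpa [M] using hv
    omega
  have hconn' : ∀ x y : V, x ≠ y → ∃ l : List V, l.Nodup ∧ l.IsChain r ∧ l.head? = some x ∧
      l.getLast? = some y := by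
    intro x y hxy
    obtain ⟨l, ⟨-, hnd, hc⟩, hh, ht⟩ := hconn x y hxy
    exact ⟨l, hnd, hc.imp fun _ _ h => Or.inl h, hh, ht⟩
  obtain ⟨x, hx⟩ : M.Nonempty := Finset.card_pos.1 (by omega)
  let p : ℕ → Prop := fun m => ∃ l, IsClosedChain r l ∧ l.countP (· ∈ M) = m
  have hb : ∀ m, p m → m ≤ Fintype.card V := by
    rintro m ⟨l, hl, rfl⟩
    exact List.countP_le_length.trans hl.1.length_le_card
  have h1 : p 1 := ⟨[x], ⟨by simp, by simp [r]⟩, by simp [hx]⟩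
  obtain ⟨l, hl, hk⟩ := Nat.findGreatest_spec (hb _ h1) h1
  have hpos : 1 ≤ l.countP (· ∈ M) := hk ▸ Nat.le_findGreatest (hb _ h1) h1
  have hcov : ∀ v ∈ M, v ∈ l :=
    closed_chain_of_max_covers hM hdegM hconn'
      (fun l' hl' => Nat.le_findGreatest (hb _ ⟨l', hl', rfl⟩) ⟨l', hl', rfl⟩) hl hk
      (by simpa using List.countP_pos_iff.1 hpos)
  have hsub : M ⊆ l.toFinset := fun v hv => List.mem_toFinset.2 (hcov v hv)
  have hlen := Finset.card_le_card hsub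
  rw [List.toFinset_card_of_nodup hl.1] at hlen
  have hle := hl.1.length_le_card
  have hcycle : IsCycleOn A l := hl.isCycleOn (by omega)
  by_cases hfull : l.length = Fintype.card V
  · refine Or.inl ⟨l, hcycle, fun v => ?_⟩
    have : l.toFinset = Finset.univ :=
      Finset.card_eq_iff_eq_univ _ |>.1 (by rw [List.toFinset_card_of_nodup hl.1, hfull])
    exact List.mem_toFinset.1 (this ▸ Finset.mem_univ v)
  · exact Or.inr ⟨l, hcycle, by omega⟩
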